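/- arXiv:1407.3041 — 9 statements merged into one kernel-verified Lean document; each statement's English description precedes it below -/
import Mathlib

section
/- Any digraph with n ≥ 1 vertices has at most 2n − 2 strong bridges. -/
variable {V : Type*}

/-- `p` is a path from `u` to `w` in the digraph with edge set `E`:
a nonempty list of vertices starting at `u`, ending at `w`, with consecutive edges in `E`. -/
def IsPathFrom (E : Set (V × V)) (u w : V) (p : List V) : Prop :=
  p.head? = some u ∧ p.getLast? = some w ∧ p.Chain' (fun a b => (a, b) ∈ E)

/-- There is a path from `u` to `w` in the digraph with edge set `E`. -/
def Reaches (E : Set (V × V)) (u w : V) : Prop :=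
  ∃ p, IsPathFrom E u w p

/-- Every vertex has a path to every other vertex. -/
def StronglyConnected (E : Set (V × V)) : Prop :=
  ∀ u w : V, Reaches E u w

/-- `v` and `w` are 2-edge-connected: `v = w` or, for every edge `e`,
there are paths from `v` to `w` and from `w` to `v` avoiding `e`. -/
def TwoEdgeConn (E : Set (V × V)) (v w : V) : Prop :=
  v = w ∨ ∀ e ∈ E, Reaches (E \ {e}) v w ∧ Reaches (E \ {e}) w v

/-- `w` is 2-edge-connected from `v`: for every edge `e` there is a path
from `v` to `w` avoiding `e`. -/
def TwoEdgeConnFrom (E : Set (V × V)) (v w : V) : Prop :=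
  ∀ e ∈ E, Reaches (E \ {e}) v w

/-- `u` dominates `w` in the flow graph with start vertex `s`:
every path from `s` to `w` contains `u`. -/
def Dominates (E : Set (V × V)) (s u w : V) : Prop :=
  ∀ p, IsPathFrom E s w p → u ∈ p

/-- `(u, w)` is a bridge of the flow graph with start vertex `s`:
every path from `s` to `w` contains the edge `(u, w)`. -/
def IsBridge (E : Set (V × V)) (s u w : V) : Prop :=
  (u, w) ∈ E ∧ ∀ p, IsPathFrom E s w p → (u, w) ∈ p.zip p.tail

/-- `w` is marked in the flow graph with start vertex `s`: some bridge ends at `w`. -/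
def Marked (E : Set (V × V)) (s w : V) : Prop :=
  ∃ u, IsBridge E s u w

/-- The reverse digraph: every edge direction is reversed. -/
def reverseE (E : Set (V × V)) : Set (V × V) :=
  {e | (e.2, e.1) ∈ E}

/-- `u` and `w` are mutually reachable. -/
def MutualReach (E : Set (V × V)) (u w : V) : Prop :=
  Reaches E u w ∧ Reaches E w u

/-- The number of strongly connected components: the number of equivalence
classes of the mutual-reachability relation. -/
noncomputable def numSCC (E : Set (V × V)) : ℕ :=
  Nat.card (Quot (MutualReach E))

/-- `e` is a strong bridge: removing it increases the number of strongly
connected components. -/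
def IsStrongBridge (E : Set (V × V)) (e : V × V) : Prop :=
  e ∈ E ∧ numSCC E < numSCC (E \ {e})

/-- `d` is the immediate dominator of `w` in the flow graph with start vertex `s`:
`d` is a proper dominator of `w` dominated by every proper dominator of `w`. -/
def ImmDomIs (E : Set (V × V)) (s w d : V) : Prop :=
  Dominates E s d w ∧ d ≠ w ∧ ∀ x, Dominates E s x w → x ≠ w → Dominates E s x d

/-- `r` is the deepest marked dominator `r_v` of `v`: either `r` is a marked
dominator of `v` dominated by every marked dominator of `v`, or no marked vertex
dominates `v` and `r = s`. -/
def DeepestMarkedDomIs (E : Set (V × V)) (s v r : V) : Prop :=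
  (Marked E s r ∧ Dominates E s r v ∧
    ∀ x, Marked E s x → Dominates E s x v → Dominates E s x r)
  ∨ (r = s ∧ ∀ x, Marked E s x → ¬ Dominates E s x v)

/-- `T(r)`: the vertices whose deepest marked dominator is `r`. -/
def Tset (E : Set (V × V)) (s r : V) : Set V :=
  {v | DeepestMarkedDomIs E s v r}

/-- The roots of the decomposition of the dominator tree: `s` and the marked vertices. -/
def IsRoot (E : Set (V × V)) (s r : V) : Prop :=
  r = s ∨ Marked E s r

/-- `z` is a marked child (in the dominator tree) of a boundary vertex of `T(r)`. -/
def MarkedChildOfBoundary (E : Set (V × V)) (s r z : V) : Prop :=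
  Marked E s z ∧ ∃ x ∈ Tset E s r, ImmDomIs E s z x

/-- The vertex set `V_r` of the auxiliary graph `G_r` (with `dr` playing the role
of `d(r)` when `r ≠ s`): the ordinary vertices `T(r)`, the marked children of
boundary vertices of `T(r)`, and (if `r ≠ s`) the vertex `d(r)`. -/
def auxVerts (E : Set (V × V)) (s r dr : V) : Set V :=
  Tset E s r ∪ {z | MarkedChildOfBoundary E s r z} ∪ {x | r ≠ s ∧ x = dr}

/-- The edge set `E_r` of the auxiliary graph `G_r` (with `dr` playing the role of
`d(r)` when `r ≠ s`): edges of `G` between ordinary vertices; the edge `(v, w)` for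
each boundary vertex `v ∈ T(r)` and marked child `w` of `v`; the edge `(d(r), r)` if
`r ≠ s`; and the shortcut edges of types (a), (b), (c). -/
def auxEdges (E : Set (V × V)) (s r dr : V) : Set (V × V) :=
  {e | e ∈ E ∧ e.1 ∈ Tset E s r ∧ e.2 ∈ Tset E s r} ∪
  {e | e.1 ∈ Tset E s r ∧ Marked E s e.2 ∧ ImmDomIs E s e.2 e.1} ∪
  {e | r ≠ s ∧ e = (dr, r)} ∪
  {e | ∃ u v, (u, v) ∈ E ∧ u ∈ Tset E s r ∧ ¬ Dominates E s r v ∧ e = (u, dr)} ∪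
  {e | ∃ u v z, (u, v) ∈ E ∧ v ∈ Tset E s r ∧ Dominates E s r u ∧ u ∉ Tset E s r ∧
      MarkedChildOfBoundary E s r z ∧ Dominates E s z u ∧ e = (z, v)} ∪
  {e | ∃ u v z, (u, v) ∈ E ∧ Dominates E s r u ∧ u ∉ Tset E s r ∧ ¬ Dominates E s r v ∧
      MarkedChildOfBoundary E s r z ∧ Dominates E s z u ∧ e = (z, dr)}

open Relation in
theorem reaches_iff_rtg {V : Type*} (E : Set (V × V)) (u w : V) :
    Reaches E u w ↔ ReflTransGen (fun a b => (a, b) ∈ E) u w := by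
  constructor
  · rintro ⟨p, h1, h2, h3⟩
    induction p generalizing u with
    | nil => simp at h1
    | cons x t ih =>
      simp only [List.head?_cons, Option.some.injEq] at h1
      subst h1
      cases t with
      | nil =>
        simp only [List.getLast?_singleton, Option.some.injEq] at h2
        subst h2
        exact ReflTransGen.refl
      | cons y t =>
        have h3' := List.isChain_cons_cons.1 h3
        exact ReflTransGen.head h3'.1 (ih y rfl (by simpa using h2) h3'.2)
  · intro h
    induction h using ReflTransGen.head_induction_on with
    | refl => exact ⟨[w], rfl, rfl, List.isChain_singleton _⟩
    | head hab hrest ih =>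
      rename_i a c
      obtain ⟨p, h1, h2, h3⟩ := ih
      cases p with
      | nil => simp at h1
      | cons y t =>
        simp only [List.head?_cons, Option.some.injEq] at h1
        subst h1
        exact ⟨a :: y :: t, rfl, by simpa using h2, List.isChain_cons_cons.2 ⟨hab, h3⟩⟩

/-- Reachability. -/
def RR {V : Type*} (E : Set (V × V)) : V → V → Prop :=
  Relation.ReflTransGen (fun a b => (a, b) ∈ E)

theorem RR_swap {V : Type*} (E : Set (V × V)) (u w : V) :
    RR (Prod.swap ⁻¹' E) u w ↔ RR E w u := by
  unfold RR
  rw [← Relation.reflTransGen_swap]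
  rfl

theorem RR_first {V : Type*} (E : Set (V × V)) (s b x : V) (hs : RR E s x) :
    RR {e ∈ E | e.2 ≠ b} s x ∨ ∃ c, RR {e ∈ E | e.2 ≠ b} s c ∧ (c, b) ∈ E := by
  induction hs with
  | refl => exact Or.inl Relation.ReflTransGen.refl
  | tail hsy hyz ih =>
    rename_i y z
    rcases ih with ih | ih
    · by_cases h : z = b
      · subst h
        exact Or.inr ⟨y, ih, hyz⟩
      · exact Or.inl (ih.tail ⟨hyz, h⟩)
    · exact Or.inr ih

theorem RR_mono {V : Type*} {E F : Set (V × V)} (h : E ⊆ F) {u w : V} (hr : RR E u w) :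
    RR F u w :=
  Relation.ReflTransGen.mono (fun _ _ hab => h hab) _ _ hr

theorem bridge_unique {V : Type*} (E : Set (V × V)) (s a a' b : V) (hs : RR E s b)
    (h : ¬ RR (E \ {(a, b)}) s b) (h' : ¬ RR (E \ {(a', b)}) s b) : a = a' := by
  by_contra hne
  have key : ∀ d, {e ∈ E | e.2 ≠ b} ⊆ E \ {(d, b)} := by
    rintro d ⟨x, y⟩ ⟨h1, h2⟩
    refine ⟨h1, ?_⟩
    rintro h3
    simp only [Set.mem_singleton_iff, Prod.mk.injEq] at h3
    exact h2 h3.2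
  rcases RR_first E s b b hs with h1 | ⟨c, hc, hcb⟩
  · exact h (RR_mono (key a) h1)
  · have : ∀ d, ¬ RR (E \ {(d, b)}) s b → c = d := by
      intro d hd
      by_contra hcd
      refine hd ((RR_mono (key d) hc).tail ⟨hcb, ?_⟩)
      simpa using hcd
    exact hne ((this a h).symm.trans (this a' h'))

theorem card_type1 {V : Type*} [Fintype V] (E : Set (V × V)) (ρ : V → V) (v0 : V)
    (hρ : ρ (ρ v0) = ρ v0) :
    {e : V × V | RR E (ρ e.2) e.2 ∧ ¬ RR (E \ {e}) (ρ e.2) e.2}.ncard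
      ≤ Nat.card V - 1 := by
  have hc : ({ρ v0}ᶜ : Set V).ncard = Nat.card V - 1 := by
    rw [Set.ncard_compl, Set.ncard_singleton]
  rw [← hc]
  refine Set.ncard_le_ncard_of_injOn Prod.snd ?_ ?_ (Set.toFinite _)
  · rintro ⟨a, b⟩ ⟨_, h2⟩ h3
    simp only [Set.mem_singleton_iff] at h3
    subst h3
    apply h2
    simp only [hρ]
    exact Relation.ReflTransGen.refl
  · rintro ⟨a, b⟩ ⟨h1, h2⟩ ⟨a', b'⟩ ⟨_, h2'⟩ hb
    simp only at hb
    subst hb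
    rw [bridge_unique E _ a a' b h1 h2 h2']

theorem card_type2 {V : Type*} [Fintype V] (E : Set (V × V)) (ρ : V → V) (v0 : V)
    (hρ : ρ (ρ v0) = ρ v0) :
    {e : V × V | RR E e.1 (ρ e.1) ∧ ¬ RR (E \ {e}) e.1 (ρ e.1)}.ncard
      ≤ Nat.card V - 1 := by
  refine le_trans ?_ (card_type1 (Prod.swap ⁻¹' E) ρ v0 hρ)
  refine Set.ncard_le_ncard_of_injOn Prod.swap ?_ Prod.swap_injective.injOn (Set.toFinite _)
  rintro ⟨a, b⟩ ⟨h1, h2⟩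
  refine ⟨(RR_swap _ _ _).2 h1, fun h3 => h2 ?_⟩
  rw [← RR_swap]
  refine RR_mono ?_ h3
  rintro ⟨x, y⟩ ⟨h4, h5⟩
  refine ⟨h4, fun h6 => h5 ?_⟩
  simp only [Set.mem_singleton_iff, Prod.swap_prod_mk, Prod.mk.injEq] at h6 ⊢
  exact h6.symm

theorem RR_avoid {V : Type*} (E : Set (V × V)) (a b u w : V) (h : RR E u w) :
    RR (E \ {(a, b)}) u w ∨ (RR E u a ∧ RR E b w) := by
  unfold RR at h
  induction h with
  | refl => exact Or.inl Relation.ReflTransGen.refl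
  | tail huy hyz ih =>
    rename_i y z
    rcases ih with ih | ih
    · by_cases h : (y, z) = (a, b)
      · obtain ⟨rfl, rfl⟩ := Prod.mk.inj h
        exact Or.inr ⟨huy, Relation.ReflTransGen.refl⟩
      · exact Or.inl (ih.tail ⟨hyz, h⟩)
    · exact Or.inr ⟨ih.1, ih.2.tail hyz⟩

theorem RR_replace {V : Type*} (E : Set (V × V)) (a b u w : V) (h : RR E u w)
    (hab : RR (E \ {(a, b)}) a b) : RR (E \ {(a, b)}) u w := by
  unfold RR at h
  induction h with
  | refl => exact Relation.ReflTransGen.refl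
  | tail huy hyz ih =>
    rename_i y z
    by_cases h : (y, z) = (a, b)
    · obtain ⟨rfl, rfl⟩ := Prod.mk.inj h
      exact ih.trans hab
    · exact ih.tail ⟨hyz, h⟩

theorem strong_bridge_split {V : Type*} [Fintype V] (E : Set (V × V)) (a b : V)
    (h : IsStrongBridge E (a, b)) :
    RR E a b ∧ RR E b a ∧ ¬ RR (E \ {(a, b)}) a b := by
  obtain ⟨hE, hlt⟩ := h
  have hab : RR E a b := Relation.ReflTransGen.single hE
  have hex : ∃ u w, RR E u w ∧ RR E w u ∧ ¬ RR (E \ {(a, b)}) u w := by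
    by_contra! hcon
    refine absurd hlt (not_lt.2 ?_)
    unfold numSCC
    have hf : ∀ u w, MutualReach E u w → MutualReach (E \ {(a, b)}) u w := by
      rintro u w ⟨h1, h2⟩
      rw [reaches_iff_rtg] at h1 h2
      refine ⟨?_, ?_⟩
      · rw [reaches_iff_rtg]
        exact hcon u w h1 h2
      · rw [reaches_iff_rtg]
        exact hcon w u h2 h1
    refine Nat.card_le_card_of_surjective (Quot.map id hf) ?_
    rintro ⟨x⟩
    exact ⟨Quot.mk _ x, rfl⟩
  obtain ⟨u, w, h1, h2, h3⟩ := hex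
  refine ⟨hab, ?_, fun h => h3 (RR_replace E a b u w h1 h)⟩
  rcases RR_avoid E a b u w h1 with h | ⟨h4, h5⟩
  · exact absurd h h3
  · exact (h5.trans h2).trans h4

/-- Mutual reachability setoid. -/
def sccSetoid {V : Type*} (E : Set (V × V)) : Setoid V where
  r u w := RR E u w ∧ RR E w u
  iseqv := ⟨fun _ => ⟨Relation.ReflTransGen.refl, Relation.ReflTransGen.refl⟩,
    fun h => ⟨h.2, h.1⟩, fun h k => ⟨h.1.trans k.1, k.2.trans h.2⟩⟩

/-- Any digraph with `n ≥ 1` vertices has at most `2n - 2` strong bridges. -/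
theorem strong_bridges_at_most_two_n_minus_two
    {V : Type*} [Fintype V] (E : Set (V × V)) (hn : 1 ≤ Nat.card V) :
    {e : V × V | IsStrongBridge E e}.ncard ≤ 2 * Nat.card V - 2 := by
  obtain ⟨v0⟩ : Nonempty V := by
    by_contra hne
    rw [not_nonempty_iff] at hne
    simp at hn
  let S := sccSetoid E
  let ρ : V → V := fun v => (Quotient.mk S v).out
  have hρ1 : ∀ v, RR E (ρ v) v ∧ RR E v (ρ v) := fun v => Quotient.mk_out (s := S) v
  have hρ2 : ∀ u v, RR E u v → RR E v u → ρ u = ρ v := by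
    intro u v h1 h2
    have : Quotient.mk S u = Quotient.mk S v := Quotient.sound (s := S) ⟨h1, h2⟩
    simp only [ρ, this]
  have hρ3 : ρ (ρ v0) = ρ v0 := hρ2 _ _ (hρ1 v0).1 (hρ1 v0).2
  have c1 := card_type1 E ρ v0 hρ3
  have c2 := card_type2 E ρ v0 hρ3
  have hsub : {e : V × V | IsStrongBridge E e} ⊆
      {e : V × V | RR E (ρ e.2) e.2 ∧ ¬ RR (E \ {e}) (ρ e.2) e.2} ∪
      {e : V × V | RR E e.1 (ρ e.1) ∧ ¬ RR (E \ {e}) e.1 (ρ e.1)} := by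
    rintro ⟨a, b⟩ he
    obtain ⟨h1, h2, h3⟩ := strong_bridge_split E a b he
    by_contra hcon
    simp only [Set.mem_union, Set.mem_setOf_eq, not_or, not_and, not_not] at hcon
    have k1 := hcon.1 (hρ1 b).1
    have k2 := hcon.2 (hρ1 a).2
    rw [hρ2 a b h1 h2] at k2
    exact h3 (k2.trans k1)
  have := Set.ncard_le_ncard hsub (Set.toFinite _)
  have := Set.ncard_union_le {e : V × V | RR E (ρ e.2) e.2 ∧ ¬ RR (E \ {e}) (ρ e.2) e.2}
    {e : V × V | RR E e.1 (ρ e.1) ∧ ¬ RR (E \ {e}) e.1 (ρ e.1)}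
  omega
end

section
/- Let G = (V, E) be a strongly connected digraph with at least two vertices and let s ∈ V. An edge e = (u, w) ∈ E is a strong bridge of G if and only if (u, w) is a bridge of the flow graph G(s) or (w, u) is a bridge of the flow graph G^R(s). -/
variable {V : Type*}

theorem aux_chain_iff {V : Type*} (R : V → V → Prop) (p : List V) :
    List.IsChain R p ↔ ∀ a b, (a, b) ∈ p.zip p.tail → R a b := by
  induction p with
  | nil => simp
  | cons x t ih =>
    cases t with
    | nil => simp
    | cons y t =>
      rw [List.isChain_cons_cons, ih]
      simp only [List.tail_cons, List.zip_cons_cons, List.mem_cons, Prod.mk.injEq]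
      constructor
      · rintro ⟨h1, h2⟩ a b (⟨rfl, rfl⟩ | h)
        · exact h1
        · exact h2 a b h
      · intro h
        exact ⟨h x y (Or.inl ⟨rfl, rfl⟩), fun a b hab => h a b (Or.inr hab)⟩

theorem aux_reaches_iff {V : Type*} (E : Set (V × V)) (u w : V) :
    Reaches E u w ↔ Relation.ReflTransGen (fun a b => (a, b) ∈ E) u w := by
  constructor
  · rintro ⟨p, h1, h2, h3⟩
    induction p generalizing u with
    | nil => simp at h1
    | cons x t ih =>
      simp only [List.head?_cons, Option.some.injEq] at h1
      subst h1
      cases t with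
      | nil =>
        simp at h2
        subst h2
        exact Relation.ReflTransGen.refl
      | cons y t =>
        have h3' := List.isChain_cons_cons.1 h3
        exact Relation.ReflTransGen.head h3'.1 (ih y rfl (by simpa using h2) h3'.2)
  · intro h
    induction h using Relation.ReflTransGen.head_induction_on with
    | refl => exact ⟨[w], by simp, by simp, List.isChain_singleton _⟩
    | @head a c hac _ ih =>
      obtain ⟨p, h1, h2, h3⟩ := ih
      cases p with
      | nil => simp at h1
      | cons y t =>
        simp only [List.head?_cons, Option.some.injEq] at h1
        subst h1
        exact ⟨a :: y :: t, rfl, by simpa using h2, List.isChain_cons_cons.2 ⟨hac, h3⟩⟩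

theorem aux_bridge_iff {V : Type*} (E : Set (V × V)) (s u w : V) (he : (u, w) ∈ E) :
    IsBridge E s u w ↔ ¬ Reaches (E \ {(u, w)}) s w := by
  constructor
  · rintro ⟨_, h⟩ ⟨p, h1, h2, h3⟩
    have h3' := (aux_chain_iff _ p).1 h3
    have hp := h p ⟨h1, h2, (aux_chain_iff _ p).2 fun a b hab => (h3' a b hab).1⟩
    exact (h3' u w hp).2 rfl
  · intro h
    refine ⟨he, fun p hp => ?_⟩
    by_contra hc
    obtain ⟨h1, h2, h3⟩ := hp
    have h3' := (aux_chain_iff _ p).1 h3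
    refine h ⟨p, h1, h2, (aux_chain_iff _ p).2 fun a b hab => ⟨h3' a b hab, ?_⟩⟩
    intro heq
    rw [Set.mem_singleton_iff] at heq
    rw [heq] at hab
    exact hc hab

theorem aux_mutual_equiv {V : Type*} (E : Set (V × V)) : Equivalence (MutualReach E) := by
  have ht : ∀ {a b c : V}, Reaches E a b → Reaches E b c → Reaches E a c := by
    intro a b c h k
    rw [aux_reaches_iff] at *
    exact h.trans k
  have hr : ∀ a : V, Reaches E a a := fun a => (aux_reaches_iff E a a).2 .refl
  exact ⟨fun a => ⟨hr a, hr a⟩, fun h => ⟨h.2, h.1⟩,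
    fun h k => ⟨ht h.1 k.1, ht k.2 h.2⟩⟩

theorem aux_subsingleton_iff {V : Type*} (E : Set (V × V)) :
    Subsingleton (Quot (MutualReach E)) ↔ StronglyConnected E := by
  constructor
  · intro h a b
    have hq : Quot.mk (MutualReach E) a = Quot.mk (MutualReach E) b := Subsingleton.elim _ _
    exact ((aux_mutual_equiv E).eqvGen_iff.1 (Quot.eqvGen_exact hq)).1
  · intro h
    refine ⟨fun x y => ?_⟩
    induction x using Quot.ind
    induction y using Quot.ind
    exact Quot.sound ⟨h _ _, h _ _⟩

theorem aux_reverse {V : Type*} (E : Set (V × V)) (s u w : V) :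
    Reaches (reverseE E \ {(w, u)}) s u ↔ Reaches (E \ {(u, w)}) u s := by
  rw [aux_reaches_iff, aux_reaches_iff, ← Relation.reflTransGen_swap]
  have : (Function.swap fun a b => (a, b) ∈ reverseE E \ {(w, u)}) =
      fun a b => (a, b) ∈ E \ {(u, w)} := by
    funext a b
    simp [Function.swap, reverseE, and_comm]
  rw [this]

/-- In a strongly connected digraph with at least two vertices, an edge `(u, w)` is a
strong bridge if and only if it is a bridge of the flow graph `G(s)` or `(w, u)` is a
bridge of the reverse flow graph `G^R(s)`. -/
theorem strong_bridge_iff_bridge_of_flow_graphs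
    {V : Type*} [Fintype V] (E : Set (V × V)) (s : V)
    (hsc : StronglyConnected E) (hn : 2 ≤ Nat.card V)
    (u w : V) (he : (u, w) ∈ E) :
    IsStrongBridge E (u, w) ↔ IsBridge E s u w ∨ IsBridge (reverseE E) s w u := by
  have : Finite (Quot (MutualReach (E \ {(u, w)}))) := Quot.finite _
  have h1 : numSCC E = 1 := by
    have := (aux_subsingleton_iff E).2 hsc
    have : Nonempty (Quot (MutualReach E)) := ⟨Quot.mk _ s⟩
    exact Nat.card_eq_one_iff_unique.2 ⟨inferInstance, inferInstance⟩
  have h2 : IsStrongBridge E (u, w) ↔ ¬ StronglyConnected (E \ {(u, w)}) := by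
    rw [← aux_subsingleton_iff, not_subsingleton_iff_nontrivial,
      ← Finite.one_lt_card_iff_nontrivial, IsStrongBridge, h1, numSCC]
    exact and_iff_right he
  rw [h2, aux_bridge_iff E s u w he, aux_bridge_iff (reverseE E) s w u he, aux_reverse,
    ← not_and_or, not_iff_not]
  constructor
  · intro h
    exact ⟨h _ _, h _ _⟩
  · rintro ⟨hsw, hus⟩ a b
    have hab := hsc a b
    rw [aux_reaches_iff] at *
    have huw := hus.trans hsw
    induction hab with
    | refl => exact .refl
    | @tail c d _ hcd ih =>
      by_cases hc : (c, d) = (u, w)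
      · obtain ⟨rfl, rfl⟩ := Prod.mk.inj hc
        exact ih.trans huw
      · exact ih.tail ⟨hcd, hc⟩
end

section
/- Let G = (V, E) be a strongly connected digraph, let v ∈ V, and let w ∈ V with w ≠ v. Then w is 2-edge-connected from v if and only if no marked vertex of the flow graph G(v) dominates w in G(v). -/
variable {V : Type*}

theorem chain_diff_iff {V : Type*} (E : Set (V × V)) (e : V × V) (p : List V) :
    p.IsChain (fun a b => (a, b) ∈ E \ {e}) ↔
      p.IsChain (fun a b => (a, b) ∈ E) ∧ e ∉ p.zip p.tail := by
  induction p with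
  | nil => simp
  | cons a t ih =>
    cases t with
    | nil => simp
    | cons b t =>
      simp only [List.isChain_cons_cons, List.tail_cons, List.zip_cons_cons, List.mem_cons] at ih ⊢
      rw [ih]
      simp only [Set.mem_sdiff, Set.mem_singleton_iff, eq_comm (a := e)]
      tauto

theorem reaches_snoc {V : Type*} {E : Set (V × V)} {u x y : V} (h : Reaches E u x)
    (hxy : (x, y) ∈ E) : Reaches E u y := by
  obtain ⟨p, h1, h2, h3⟩ := h
  refine ⟨p ++ [y], ?_, by simp, ?_⟩
  · simp [h1]
  · refine List.IsChain.append h3 (by simp) ?_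
    intro a ha b hb
    simp_all

theorem reaches_extend {V : Type*} {E : Set (V × V)} {a b v w : V}
    (hb : Reaches (E \ {(a, b)}) v b) (p : List V) :
    ∀ u, Reaches (E \ {(a, b)}) v u → IsPathFrom E u w p → Reaches (E \ {(a, b)}) v w := by
  induction p with
  | nil => intro u _ h; simp [IsPathFrom] at h
  | cons c t ih =>
    rintro u hu ⟨h1, h2, h3⟩
    cases t with
    | nil => simp at h1 h2; subst h1; subst h2; exact hu
    | cons d t =>
      replace h3 : List.IsChain (fun a b => (a, b) ∈ E) (c :: d :: t) := h3
      rw [List.isChain_cons_cons] at h3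
      simp at h1
      subst h1
      refine ih d ?_ ⟨rfl, by simpa using h2, h3.2⟩
      by_cases hd : d = b
      · rw [hd]; exact hb
      · exact reaches_snoc hu ⟨h3.1, by simp [hd]⟩

/-- In a strongly connected digraph, `w ≠ v` is 2-edge-connected from `v` if and only
if no marked vertex of the flow graph `G(v)` dominates `w` in `G(v)`. -/
theorem two_edge_connected_from_iff_no_marked_dominator
    {V : Type*} [Fintype V] (E : Set (V × V))
    (hsc : StronglyConnected E) (v w : V) (hvw : w ≠ v) :
    TwoEdgeConnFrom E v w ↔ ¬ ∃ x, Marked E v x ∧ Dominates E v x w := by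
  constructor
  · rintro h ⟨x, ⟨u, hu, hbr⟩, hdom⟩
    obtain ⟨p, h1, h2, h3⟩ := h _ hu
    have hx : x ∈ p := hdom p ⟨h1, h2, ((chain_diff_iff _ _ _).1 h3).1⟩
    obtain ⟨s, t, rfl⟩ := List.append_of_mem hx
    have h4 : (s ++ [x]).IsChain (fun a b => (a, b) ∈ E \ {(u, x)}) :=
      List.IsChain.prefix h3 ⟨t, by simp⟩
    rw [chain_diff_iff] at h4
    refine h4.2 (hbr _ ⟨?_, by simp, h4.1⟩)
    cases s <;> simpa using h1
  · intro h
    rintro ⟨a, b⟩ he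
    by_contra hn
    refine h ⟨b, ⟨a, he, ?_⟩, ?_⟩
    · rintro p ⟨h1, h2, h3⟩
      by_contra hp
      obtain ⟨q, hq⟩ := hsc v w
      exact hn (reaches_extend ⟨p, h1, h2, (chain_diff_iff _ _ _).2 ⟨h3, hp⟩⟩ q v
        ⟨[v], by simp, by simp, List.isChain_singleton _⟩ hq)
    · rintro p ⟨h1, h2, h3⟩
      by_contra hp
      refine hn ⟨p, h1, h2, (chain_diff_iff _ _ _).2 ⟨h3, fun hm => hp ?_⟩⟩
      exact List.mem_of_mem_tail (List.of_mem_zip hm).2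
end

section
/- Let G = (V, E) be a strongly connected digraph and let v, w ∈ V be distinct. Then v ↔₂ₑ w if and only if no marked vertex of the flow graph G(v) dominates w in G(v) and no marked vertex of the flow graph G^R(v) dominates w in G^R(v). -/
variable {V : Type*}

theorem chain_iff_zip (r : V → V → Prop) (p : List V) :
    p.IsChain r ↔ ∀ x ∈ p.zip p.tail, r x.1 x.2 := by
  induction p with
  | nil => simp
  | cons a t ih =>
    cases t with
    | nil => simp
    | cons b t =>
      rw [List.isChain_cons_cons, ih]
      simp only [List.tail_cons, List.zip_cons_cons, List.mem_cons, forall_eq_or_imp]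

theorem isPathFrom_diff (E : Set (V × V)) (e : V × V) (u w : V) (p : List V) :
    IsPathFrom (E \ {e}) u w p ↔ IsPathFrom E u w p ∧ e ∉ p.zip p.tail := by
  have h1 := chain_iff_zip (fun a b => (a, b) ∈ E) p
  have h2 := chain_iff_zip (fun a b => (a, b) ∈ E \ {e}) p
  unfold IsPathFrom
  constructor
  · rintro ⟨a, b, c⟩
    have c' := h2.1 c
    exact ⟨⟨a, b, h1.2 fun x hx => (c' x hx).1⟩, fun he => (c' e he).2 rfl⟩
  · rintro ⟨⟨a, b, c⟩, d⟩
    refine ⟨a, b, h2.2 fun x hx => ⟨h1.1 c x hx, ?_⟩⟩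
    rintro h
    have h : x = e := h
    exact d (h ▸ hx)

theorem path_prefix (E : Set (V × V)) (u w x : V) (p : List V)
    (hp : IsPathFrom E u w p) (hx : x ∈ p) : Reaches E u x := by
  obtain ⟨l, r, rfl⟩ := List.append_of_mem hx
  obtain ⟨a, b, c⟩ := hp
  refine ⟨l ++ [x], ?_, by simp, ?_⟩
  · cases l <;> simpa using a
  · have c : List.IsChain (fun a b => (a, b) ∈ E) (l ++ x :: r) := c
    have e : l ++ x :: r = (l ++ [x]) ++ r := by simp
    rw [e] at c
    exact c.left_of_append

theorem reaches_step (E : Set (V × V)) (u w x : V) (h : Reaches E u w) (hx : (w, x) ∈ E) :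
    Reaches E u x := by
  obtain ⟨p, a, b, c⟩ := h
  refine ⟨p ++ [x], ?_, by simp, ?_⟩
  · cases p <;> simp_all
  · have c : List.IsChain (fun a b => (a, b) ∈ E) p := c
    refine List.isChain_append.2 ⟨c, by simp, ?_⟩
    intro y hy z hz
    simp_all

theorem reaches_iff (E : Set (V × V)) (u w : V) :
    Reaches E u w ↔ Relation.ReflTransGen (fun a b => (a, b) ∈ E) u w := by
  constructor
  · rintro ⟨p, hp⟩
    induction p generalizing u with
    | nil => simp [IsPathFrom] at hp
    | cons a t ih =>
      obtain ⟨h1, h2, h3⟩ := hp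
      have h1 : a = u := by simpa using h1
      subst h1
      cases t with
      | nil =>
        have h2 : a = w := by simpa using h2
        subst h2
        exact .refl
      | cons b t =>
        have h4 := List.isChain_cons_cons.1 h3
        exact .head h4.1 (ih b ⟨rfl, by simpa using h2, h4.2⟩)
  · intro h
    induction h with
    | refl => exact ⟨[u], rfl, rfl, List.isChain_singleton _⟩
    | tail _ h ih => exact reaches_step _ _ _ _ ih h

theorem from_iff (E : Set (V × V)) (s w : V) (hr : Reaches E s w) :
    (∀ e ∈ E, Reaches (E \ {e}) s w) ↔ ¬ ∃ x, Marked E s x ∧ Dominates E s x w := by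
  constructor
  · rintro h ⟨x, ⟨u, hu, hb⟩, hd⟩
    obtain ⟨p, hp⟩ := h _ hu
    obtain ⟨q, hq⟩ := path_prefix _ _ _ x p hp (hd p ((isPathFrom_diff _ _ _ _ _).1 hp).1)
    have := (isPathFrom_diff _ _ _ _ _).1 hq
    exact this.2 (hb q this.1)
  · rintro h ⟨a, b⟩ he
    by_contra hn
    refine h ⟨b, ⟨a, he, fun p hp => ?_⟩, fun p hp => ?_⟩
    · by_contra hz
      have hb : Reaches (E \ {(a, b)}) s b := ⟨p, (isPathFrom_diff _ _ _ _ _).2 ⟨hp, hz⟩⟩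
      apply hn
      rw [reaches_iff] at hr
      clear hn h
      induction hr with
      | refl => exact ⟨[s], rfl, rfl, List.isChain_singleton _⟩
      | @tail c d _ hcd ih =>
        by_cases hd : d = b
        · exact hd ▸ hb
        · exact reaches_step _ _ _ _ ih ⟨hcd, by simp [hd]⟩
    · by_contra hz
      refine hn ⟨p, (isPathFrom_diff _ _ _ _ _).2 ⟨hp, fun hm => hz ?_⟩⟩
      exact List.mem_of_mem_tail (List.of_mem_zip hm).2

theorem reaches_reverse (E : Set (V × V)) (e : V × V) (v w : V) :
    Reaches (reverseE E \ {e.swap}) v w ↔ Reaches (E \ {e}) w v := by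
  rw [reaches_iff, reaches_iff, ← Relation.reflTransGen_swap]
  have : (Function.swap fun a b => (a, b) ∈ reverseE E \ {e.swap}) =
      fun a b => (a, b) ∈ E \ {e} := by
    funext a b
    obtain ⟨c, d⟩ := e
    simp [Function.swap, reverseE, and_comm]
  rw [this]

/-- In a strongly connected digraph, distinct vertices `v` and `w` are
2-edge-connected if and only if no marked vertex of `G(v)` dominates `w` in `G(v)`
and no marked vertex of `G^R(v)` dominates `w` in `G^R(v)`. -/
theorem two_edge_connected_iff_no_marked_dominator
    {V : Type*} [Fintype V] (E : Set (V × V))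
    (hsc : StronglyConnected E) (v w : V) (hvw : v ≠ w) :
    TwoEdgeConn E v w ↔
      (¬ ∃ x, Marked E v x ∧ Dominates E v x w) ∧
      (¬ ∃ x, Marked (reverseE E) v x ∧ Dominates (reverseE E) v x w) := by
  have hrev : Reaches (reverseE E) v w := by
    rw [reaches_iff, ← Relation.reflTransGen_swap]
    exact (reaches_iff E w v).1 (hsc w v)
  rw [← from_iff E v w (hsc v w), ← from_iff _ v w hrev]
  unfold TwoEdgeConn
  constructor
  · rintro (h | h)
    · exact absurd h hvw
    · refine ⟨fun e he => (h e he).1, fun e he => ?_⟩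
      have := (reaches_reverse E e.swap v w).2 (h e.swap he).2
      simpa using this
  · rintro ⟨h1, h2⟩
    exact Or.inr fun e he => ⟨h1 e he, (reaches_reverse E e v w).1 (h2 e.swap he)⟩
end

section
/- Let G = (V, E) be a strongly connected digraph and let s ∈ V. If v ↔₂ₑ w, then the set of marked vertices of G(s) that dominate v in G(s) equals the set of marked vertices of G(s) that dominate w in G(s), and the set of marked vertices of G^R(s) that dominate v in G^R(s) equals the set of marked vertices of G^R(s) that dominate w in G^R(s). (Equivalently, v and w lie in the same subtree of the decomposition of the dominator tree of G(s) induced by removing the bridge edges, and likewise for G^R(s).) -/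
variable {V : Type*}

theorem aux_chain_zip {R : V → V → Prop} : ∀ {p : List V} {a b : V}, p.IsChain R →
    (a, b) ∈ p.zip p.tail → R a b
  | [], _, _, _, h => by simp at h
  | [_], _, _, _, h => by simp at h
  | c :: d :: p, a, b, hc, h => by
    rw [List.isChain_cons_cons] at hc
    have h' : (a, b) = (c, d) ∨ (a, b) ∈ (d :: p).zip (d :: p).tail := by
      simpa using h
    rcases h' with h' | h'
    · cases h'; exact hc.1
    · exact aux_chain_zip hc.2 h'

theorem aux_chain_avoid {E : Set (V × V)} {u x : V} : ∀ {p : List V},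
    p.IsChain (fun a b => (a, b) ∈ E) → x ∉ p →
    p.IsChain (fun a b => (a, b) ∈ E \ {(u, x)})
  | [], _, _ => by simp
  | [_], _, _ => by simp
  | c :: d :: p, hc, h => by
    rw [List.isChain_cons_cons] at hc ⊢
    refine ⟨⟨hc.1, ?_⟩, aux_chain_avoid hc.2 (fun h' => h (List.mem_cons_of_mem _ h'))⟩
    intro he
    have : d = x := congrArg Prod.snd he
    exact h (by simp [this])

theorem aux_prefix {E : Set (V × V)} {s w x : V} {p : List V} (hp : IsPathFrom E s w p)
    (hx : x ∈ p) : Reaches E s x := by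
  obtain ⟨h1, h2, h3⟩ := hp
  obtain ⟨a, b, rfl⟩ := List.append_of_mem hx
  refine ⟨a ++ [x], ?_, by simp, ?_⟩
  · cases a <;> simpa using h1
  · have : a ++ x :: b = (a ++ [x]) ++ b := by simp
    rw [this] at h3
    exact (List.isChain_append.1 h3).1

theorem aux_trans {E : Set (V × V)} {s w v : V} (h : Reaches E s w) (h' : Reaches E w v) :
    Reaches E s v := by
  obtain ⟨p, h1, h2, h3⟩ := h
  obtain ⟨q, g1, g2, g3⟩ := h'
  cases q with
  | nil => simp at g1
  | cons c q =>
    have : c = w := by simpa using g1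
    subst this
    cases q with
    | nil =>
      have : c = v := by simpa using g2
      subst this
      exact ⟨p, h1, h2, h3⟩
    | cons d q =>
      replace g3 := List.isChain_cons_cons.1 g3
      refine ⟨p ++ d :: q, ?_, ?_, ?_⟩
      · simp [List.head?_append, h1]
      · simpa [List.getLast?_append] using g2
      · refine List.isChain_append.2 ⟨h3, g3.2, ?_⟩
        intro x hx y hy
        have e1 : c = x := by simpa [h2] using hx
        have e2 : d = y := by simpa using hy
        subst e1 e2
        exact g3.1

theorem aux_key {E : Set (V × V)} {s v w x : V}
    (h : ∀ e ∈ E, Reaches (E \ {e}) w v) (hm : Marked E s x) (hd : Dominates E s x v) :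
    Dominates E s x w := by
  obtain ⟨u, hE, hb⟩ := hm
  intro p hp
  by_contra hx
  have r1 : Reaches (E \ {(u, x)}) s w := ⟨p, hp.1, hp.2.1, aux_chain_avoid hp.2.2 hx⟩
  obtain ⟨q, hq⟩ := aux_trans r1 (h _ hE)
  have hq' : x ∈ q := hd q ⟨hq.1, hq.2.1, hq.2.2.imp fun _ _ h => h.1⟩
  obtain ⟨t, ht⟩ := aux_prefix hq hq'
  have := hb t ⟨ht.1, ht.2.1, ht.2.2.imp fun _ _ h => h.1⟩
  exact (aux_chain_zip ht.2.2 this).2 rfl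

theorem aux_rev {E : Set (V × V)} {v w : V} {a b : V}
    (h : Reaches (E \ {(b, a)}) w v) : Reaches (reverseE E \ {(a, b)}) v w := by
  obtain ⟨p, h1, h2, h3⟩ := h
  refine ⟨p.reverse, by simpa using h2, by simpa using h1, ?_⟩
  refine List.isChain_reverse.2 (h3.imp ?_)
  rintro c d ⟨hE, hne⟩
  refine ⟨hE, fun he => hne ?_⟩
  cases he
  rfl

theorem aux_rev_conn {E : Set (V × V)} {v w : V} (h : TwoEdgeConn E v w) :
    TwoEdgeConn (reverseE E) v w := by
  rcases h with h | h
  · exact Or.inl h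
  · refine Or.inr ?_
    rintro ⟨a, b⟩ he
    exact ⟨aux_rev (h (b, a) he).2, aux_rev (h (b, a) he).1⟩

theorem aux_main {E : Set (V × V)} (s : V) {v w : V} (h : TwoEdgeConn E v w) :
    {x | Marked E s x ∧ Dominates E s x v} = {x | Marked E s x ∧ Dominates E s x w} := by
  rcases h with rfl | h
  · rfl
  · ext x
    exact ⟨fun ⟨hm, hd⟩ => ⟨hm, aux_key (fun e he => (h e he).2) hm hd⟩,
      fun ⟨hm, hd⟩ => ⟨hm, aux_key (fun e he => (h e he).1) hm hd⟩⟩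

/-- If `v` and `w` are 2-edge-connected in a strongly connected digraph, then the
marked vertices of `G(s)` dominating `v` are exactly those dominating `w`, and
likewise in `G^R(s)`: `v` and `w` lie in the same subtree of the decomposition of
the dominator tree induced by removing the bridges, in both `G(s)` and `G^R(s)`. -/
theorem two_edge_connected_implies_same_subtrees
    {V : Type*} [Fintype V] (E : Set (V × V)) (s : V)
    (hsc : StronglyConnected E) (v w : V) (h : TwoEdgeConn E v w) :
    {x | Marked E s x ∧ Dominates E s x v} = {x | Marked E s x ∧ Dominates E s x w} ∧
    {x | Marked (reverseE E) s x ∧ Dominates (reverseE E) s x v} =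
      {x | Marked (reverseE E) s x ∧ Dominates (reverseE E) s x w} := by
  exact ⟨aux_main s h, aux_main s (aux_rev_conn h)⟩
end

section
/- Let G = (V, E) be a digraph and s ∈ V a vertex from which every vertex is reachable. If (u, w) is a bridge of the flow graph G(s), then u is a proper dominator of w and every proper dominator of w dominates u; that is, u is the immediate dominator d(w) of w. -/
variable {V : Type*}

theorem prefix_path_aux {V : Type*} (E : Set (V × V)) (s t w : V) (p : List V)
    (hp : IsPathFrom E s t p) (hw : w ∈ p) :
    ∃ q : List V, w ∉ q ∧ IsPathFrom E s w (q ++ [w]) ∧ ∀ y ∈ q ++ [w], y ∈ p := by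
  obtain ⟨q, r, rfl, hq⟩ := List.eq_append_cons_of_mem hw
  obtain ⟨h1, _, h3⟩ := hp
  refine ⟨q, hq, ⟨?_, by simp, ?_⟩, ?_⟩
  · cases q <;> simpa using h1
  · have : q ++ w :: r = (q ++ [w]) ++ r := by simp
    rw [this] at h3
    exact (List.isChain_append.1 h3).1
  · intro y hy
    simp at hy ⊢
    tauto

/-- If `(u, w)` is a bridge of the flow graph `G(s)`, then `u` is a proper dominator
of `w` and every proper dominator of `w` dominates `u`; that is, `u` is the immediate
dominator of `w`. -/
theorem bridge_head_is_immediate_dominator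
    {V : Type*} [Fintype V] (E : Set (V × V)) (s : V)
    (hreach : ∀ v : V, Reaches E s v)
    (u w : V) (hbr : IsBridge E s u w) :
    Dominates E s u w ∧ u ≠ w ∧
      ∀ x, Dominates E s x w → x ≠ w → Dominates E s x u := by
  have hdom : Dominates E s u w := fun p hp => (List.of_mem_zip (hbr.2 p hp)).1
  refine ⟨hdom, ?_, ?_⟩
  · rintro rfl
    obtain ⟨p, hp⟩ := hreach u
    obtain ⟨q, hq, hqp, _⟩ := prefix_path_aux E s u u p hp (List.mem_of_getLast? hp.2.1)
    have h := hbr.2 _ hqp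
    cases q with
    | nil => simp at h
    | cons a l =>
      have e : (a :: l ++ [u]).zip (a :: l ++ [u]).tail = (a :: l).zip (l ++ [u]) := by
        have := List.zip_append (l₁ := a :: l) (l₂ := l ++ [u]) (r₁ := [u]) (r₂ := [])
          (by simp)
        rw [List.append_nil, List.zip_nil_right, List.append_nil] at this
        exact this
      rw [e] at h
      exact hq (List.of_mem_zip h).1
  · intro x hx hxw p hp
    by_cases hw : w ∈ p
    · obtain ⟨q, _, hqp, hsub⟩ := prefix_path_aux E s u w p hp hw
      exact hsub x (hx _ hqp)
    · have h : IsPathFrom E s w (p ++ [w]) := by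
        obtain ⟨h1, h2, h3⟩ := hp
        refine ⟨by simp [h1], by simp, ?_⟩
        refine List.isChain_append.2 ⟨h3, by simp, ?_⟩
        intro a ha b hb
        rw [h2] at ha
        simp at ha hb
        subst ha hb
        exact hbr.1
      have := hx _ h
      simp at this
      tauto
end

section
/- Let G = (V, E) be a digraph and s ∈ V a vertex from which every vertex is reachable. For every vertex w, the set of dominators of w in the flow graph G(s) is linearly ordered by the dominance relation: if u and x both dominate w in G(s), then u dominates x or x dominates u. Consequently, every vertex w ≠ s has a unique immediate dominator. -/
variable {V : Type*}

theorem split_last {V : Type*} (P : V → Prop) (l : List V) (h : ∃ a ∈ l, P a) :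
    ∃ l1 y l2, l = l1 ++ y :: l2 ∧ P y ∧ ∀ a ∈ l2, ¬ P a := by
  induction l with
  | nil => simp at h
  | cons c t ih =>
    by_cases ht : ∃ a ∈ t, P a
    · obtain ⟨l1, y, l2, h1, h2, h3⟩ := ih ht
      exact ⟨c :: l1, y, l2, by simp [h1], h2, h3⟩
    · push Not at ht
      obtain ⟨a, ha, hP⟩ := h
      rcases List.mem_cons.1 ha with rfl | ha
      · exact ⟨[], a, t, rfl, hP, ht⟩
      · exact absurd hP (ht a ha)

theorem split_first {V : Type*} (P : V → Prop) (l : List V) (h : ∃ a ∈ l, P a) :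
    ∃ l1 y l2, l = l1 ++ y :: l2 ∧ P y ∧ ∀ a ∈ l1, ¬ P a := by
  obtain ⟨l1, y, l2, h1, h2, h3⟩ := split_last P l.reverse (by simpa using h)
  refine ⟨l2.reverse, y, l1.reverse, ?_, h2, by simpa using h3⟩
  have := congrArg List.reverse h1
  simpa using this

theorem path_prefix_s9 {V : Type*} {E : Set (V × V)} {s w y : V} {l1 l2 : List V}
    (h : IsPathFrom E s w (l1 ++ y :: l2)) : IsPathFrom E s y (l1 ++ [y]) := by
  obtain ⟨h1, h2, h3⟩ := h
  refine ⟨?_, by simp, ?_⟩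
  · cases l1 <;> simpa using h1
  · have : l1 ++ y :: l2 = (l1 ++ [y]) ++ l2 := by simp
    rw [this] at h3
    exact (List.isChain_append.1 h3).1

theorem path_replace {V : Type*} {E : Set (V × V)} {s w y : V} {l1 l2 q : List V}
    (h : IsPathFrom E s w (l1 ++ y :: l2)) (hq : IsPathFrom E s y q) :
    IsPathFrom E s w (q ++ l2) := by
  obtain ⟨h1, h2, h3⟩ := h
  obtain ⟨q1, q2, q3⟩ := hq
  have h4 := (List.isChain_append.1 h3).2.1
  refine ⟨by simp [q1], ?_, ?_⟩
  · rcases List.eq_nil_or_concat l2 with rfl | ⟨l, b, rfl⟩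
    · simp at h2 ⊢
      rw [q2, h2]
    · have e : l1 ++ y :: (l ++ [b]) = (l1 ++ y :: l) ++ [b] := by simp
      simp only [List.concat_eq_append] at h2 ⊢
      rw [e, List.getLast?_concat] at h2
      rw [← List.append_assoc, List.getLast?_concat, h2]
  · refine List.isChain_append.2 ⟨q3, (List.isChain_cons.1 h4).2, ?_⟩
    intro a ha b hb
    rw [q2] at ha
    obtain rfl : y = a := by simpa using ha
    exact (List.isChain_cons.1 h4).1 b hb

theorem dom_trans {V : Type*} {E : Set (V × V)} {s u x w : V}
    (h1 : Dominates E s u x) (h2 : Dominates E s x w) : Dominates E s u w := by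
  intro p hp
  obtain ⟨a, b, rfl⟩ := List.append_of_mem (h2 p hp)
  have := h1 _ (path_prefix_s9 hp)
  simp at this ⊢
  tauto

theorem dom_refl {V : Type*} {E : Set (V × V)} {s u : V} : Dominates E s u u :=
  fun _ hp => List.mem_of_getLast? hp.2.1

theorem dom_antisymm {V : Type*} {E : Set (V × V)} {s u x : V} (hr : Reaches E s u)
    (h1 : Dominates E s u x) (h2 : Dominates E s x u) : u = x := by
  obtain ⟨p, hp⟩ := hr
  obtain ⟨a, y, b, rfl, hy, ha⟩ := split_first (fun v => v = u ∨ v = x) p ⟨u, dom_refl p hp, Or.inl rfl⟩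
  have hq := path_prefix_s9 hp
  rcases hy with rfl | rfl
  · have := h2 _ hq
    simp only [List.mem_append, List.mem_singleton] at this
    rcases this with h | h
    · exact absurd (Or.inr rfl) (ha _ h)
    · exact h.symm
  · have := h1 _ hq
    simp only [List.mem_append, List.mem_singleton] at this
    rcases this with h | h
    · exact absurd (Or.inl rfl) (ha _ h)
    · exact h

theorem dom_total {V : Type*} {E : Set (V × V)} {s w u x : V} (hr : Reaches E s w)
    (hu : Dominates E s u w) (hx : Dominates E s x w) :
    Dominates E s u x ∨ Dominates E s x u := by
  by_contra hcon
  unfold Dominates at hcon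
  push Not at hcon
  obtain ⟨⟨p, hp, hpu⟩, ⟨q, hq, hqx⟩⟩ := hcon
  obtain ⟨r, hr⟩ := hr
  obtain ⟨a, y, b, rfl, hy, hb⟩ := split_last (fun v => v = u ∨ v = x) r ⟨u, hu r hr, Or.inl rfl⟩
  rcases hy with rfl | rfl
  · rcases List.mem_append.1 (hx _ (path_replace hr hq)) with h | h
    · exact hqx h
    · exact hb _ h (Or.inr rfl)
  · rcases List.mem_append.1 (hu _ (path_replace hr hp)) with h | h
    · exact hpu h
    · exact hb _ h (Or.inl rfl)

/-- The dominators of any vertex are linearly ordered by the dominance relation;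
consequently, every vertex other than `s` has a unique immediate dominator. -/
theorem dominators_linearly_ordered_and_immediate_dominator_unique
    {V : Type*} [Fintype V] (E : Set (V × V)) (s : V)
    (hreach : ∀ v : V, Reaches E s v) :
    (∀ w u x : V, Dominates E s u w → Dominates E s x w →
      Dominates E s u x ∨ Dominates E s x u) ∧
    ∀ w : V, w ≠ s → ∃! d : V, ImmDomIs E s w d := by
  refine ⟨fun w u x hu hx => dom_total (hreach w) hu hx, fun w hw => ?_⟩
  classical
  obtain ⟨d, hd, hmax⟩ := Finset.exists_max_image
    (Finset.univ.filter fun d => Dominates E s d w ∧ d ≠ w)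
    (fun d => (Finset.univ.filter fun x => Dominates E s x d).card)
    ⟨s, by simpa using ⟨fun p hp => List.mem_of_head? hp.1, hw.symm⟩⟩
  simp only [Finset.mem_filter, Finset.mem_univ, true_and] at hd hmax
  have hI : ∀ x, Dominates E s x w → x ≠ w → Dominates E s x d := by
    intro x hx hxw
    rcases dom_total (hreach w) hx hd.1 with h | h
    · exact h
    · have hsub : (Finset.univ.filter fun z => Dominates E s z d) ⊆
          (Finset.univ.filter fun z => Dominates E s z x) := by
        intro z hz
        simp only [Finset.mem_filter, Finset.mem_univ, true_and] at hz ⊢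
        exact dom_trans hz h
      have heq := Finset.eq_of_subset_of_card_le hsub (hmax x ⟨hx, hxw⟩)
      have hm : x ∈ (Finset.univ.filter fun z => Dominates E s z x) := by
        simpa using dom_refl
      rw [← heq] at hm
      simpa using hm
  refine ⟨d, ⟨hd.1, hd.2, hI⟩, ?_⟩
  rintro e ⟨he1, he2, he3⟩
  exact dom_antisymm (hreach e) (hI e he1 he2) (he3 d hd.1 hd.2)
end

section
/- Let G = (V, E) be a strongly connected digraph with start vertex s, and let e = (u, v) ∈ E be an edge with r_u ≠ r_v. Then either e is a bridge of G(s) and u is the immediate dominator d(v) of v, or u is a proper descendant of r_v in the dominator tree, i.e., r_v dominates u in G(s) and r_v ≠ u. -/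
variable {V : Type*}

theorem aux_prefix_s10 {V : Type*} {E : Set (V × V)} {s w a : V} {l r : List V}
    (h : IsPathFrom E s w (l ++ a :: r)) : IsPathFrom E s a (l ++ [a]) := by
  obtain ⟨h1, h2, h3⟩ := h
  refine ⟨?_, by simp, ?_⟩
  · cases l <;> simpa using h1
  · have e : l ++ a :: r = (l ++ [a]) ++ r := by simp
    rw [e] at h3
    exact (List.isChain_append.1 h3).1

theorem aux_snoc {V : Type*} {E : Set (V × V)} {s u v : V} {p : List V}
    (h : IsPathFrom E s u p) (he : (u, v) ∈ E) : IsPathFrom E s v (p ++ [v]) := by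
  obtain ⟨h1, h2, h3⟩ := h
  refine ⟨?_, by simp, ?_⟩
  · cases p <;> simp_all
  · refine List.isChain_append.2 ⟨h3, by simp, ?_⟩
    intro x hx y hy
    rw [h2] at hx
    simp at hx hy
    subst hx; subst hy; exact he

theorem aux_zip {V : Type*} {u v w : V} (l : List V) (hv : v ∉ l ++ [u])
    (h : (w, v) ∈ (l ++ [u, v]).zip (l ++ [u, v]).tail) : w = u := by
  induction l with
  | nil => simpa using h
  | cons a l ih =>
    cases l with
    | nil => simp at h hv; grind
    | cons b l =>
      simp only [List.cons_append, List.tail_cons, List.zip_cons_cons, List.mem_cons] at h ih hv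
      rcases h with h | h
      · simp at h; grind
      · exact ih (fun h => hv (Or.inr h)) h

theorem aux_antisymm {V : Type*} {E : Set (V × V)} {s a b : V} (hr : Reaches E s b)
    (hab : Dominates E s a b) (hba : Dominates E s b a) : a = b := by
  by_contra hne
  obtain ⟨p, hp⟩ := hr
  have hb : b ∈ p := List.mem_of_getLast? hp.2.1
  obtain ⟨l, r, rfl, hl⟩ := List.eq_append_cons_of_mem hb
  have hq := aux_prefix_s10 hp
  have ha : a ∈ l := by simpa [hne] using hab _ hq
  obtain ⟨l', r', rfl, hl'⟩ := List.eq_append_cons_of_mem ha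
  have hq' := aux_prefix_s10 (r := r' ++ [b]) (by simpa using hq)
  have := hba _ hq'
  apply hl
  simp at this ⊢
  tauto

theorem aux_not_marked {V : Type*} {E : Set (V × V)} {s : V} : ¬ Marked E s s := by
  rintro ⟨x, -, h⟩
  simpa using h [s] ⟨by simp, by simp, List.isChain_singleton _⟩

/-- Let `e = (u, v)` be an edge with `r_u ≠ r_v`. Then either `e` is a bridge of
`G(s)` and `u` is the immediate dominator of `v`, or `u` is a proper descendant of
`r_v` in the dominator tree (`r_v` dominates `u` and `r_v ≠ u`). -/
theorem edge_between_different_subtrees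
    {V : Type*} [Fintype V] (E : Set (V × V)) (s : V)
    (hsc : StronglyConnected E) (u v ru rv : V) (he : (u, v) ∈ E)
    (hru : DeepestMarkedDomIs E s u ru) (hrv : DeepestMarkedDomIs E s v rv)
    (hne : ru ≠ rv) :
    (IsBridge E s u v ∧ ImmDomIs E s v u) ∨ (Dominates E s rv u ∧ rv ≠ u) := by
  by_cases hd : Dominates E s rv u
  · right
    refine ⟨hd, ?_⟩
    rintro rfl
    apply hne
    rcases hrv with ⟨hm, -, -⟩ | ⟨rfl, -⟩
    · rcases hru with ⟨-, h2, h3⟩ | ⟨-, h2⟩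
      · exact aux_antisymm (hsc _ _) h2 (h3 _ hm hd)
      · exact absurd hd (h2 _ hm)
    · rcases hru with ⟨-, h2, -⟩ | ⟨h1, -⟩
      · simpa using h2 [rv] ⟨by simp, by simp, List.isChain_singleton _⟩
      · exact h1
  · left
    have hd' := hd
    unfold Dominates at hd'
    push Not at hd'
    obtain ⟨p, hp, hpr⟩ := hd'
    rcases hrv with ⟨⟨w, hw⟩, h2, -⟩ | ⟨rfl, -⟩
    · have hs := aux_snoc hp he
      have : rv = v := by simpa [hpr] using h2 _ hs
      subst this
      have hz := hw.2 _ hs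
      obtain ⟨l, rfl⟩ := List.getLast?_eq_some_iff.1 hp.2.1
      have : w = u := aux_zip l hpr (by simpa using hz)
      subst this
      refine ⟨hw, fun q hq => (List.of_mem_zip (hw.2 q hq)).1, ?_, ?_⟩
      · rintro rfl; simp at hpr
      · intro x hx hxv q hq
        simpa [hxv] using hx _ (aux_snoc hq he)
    · exact absurd (fun q hq => List.mem_of_head? hq.1) hd
end

section
/- Let G = (V, E) be a strongly connected digraph with start vertex s, let r be a marked vertex of G(s), and let v be a vertex not dominated by r in G(s). Then (i) there is a path from v to r in G that contains no vertex of T(r) other than r, and (ii) every simple path in G from v to any vertex of T(r) contains the edge (d(r), r). -/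
variable {V : Type*}

theorem aux_zip_s11 {l : List V} {x y : V} (h : (x, y) ∈ l.zip l.tail) :
    ∃ l1 l2, l = l1 ++ x :: y :: l2 := by
  induction l with
  | nil => simp at h
  | cons a t ih =>
    cases t with
    | nil => simp at h
    | cons b t =>
      simp only [List.tail_cons, List.zip_cons_cons, List.mem_cons, Prod.mk.injEq] at h
      rcases h with ⟨rfl, rfl⟩ | h
      · exact ⟨[], t, rfl⟩
      · obtain ⟨l1, l2, e⟩ := ih h
        exact ⟨a :: l1, l2, by rw [e]; rfl⟩

theorem aux_zip_mem (l1 l2 : List V) (x y : V) :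
    (x, y) ∈ (l1 ++ x :: y :: l2).zip (l1 ++ x :: y :: l2).tail := by
  induction l1 with
  | nil => simp
  | cons a t ih =>
    cases t with
    | nil => simp
    | cons b t =>
      simp only [List.cons_append, List.tail_cons, List.zip_cons_cons, List.mem_cons] at ih ⊢
      exact Or.inr ih

theorem aux_zip_end {l : List V} {x y : V} (hy : y ∉ l)
    (h : (x, y) ∈ (l ++ [y]).zip (l ++ [y]).tail) : ∃ l1, l = l1 ++ [x] := by
  obtain ⟨l1, l2, e⟩ := aux_zip_s11 h
  rcases List.eq_nil_or_concat l2 with rfl | ⟨l3, b, rfl⟩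
  · refine ⟨l1, ?_⟩
    have : l ++ [y] = (l1 ++ [x]) ++ [y] := by simp [e]
    exact List.append_cancel_right this
  · exfalso
    have : l ++ [y] = (l1 ++ x :: y :: l3) ++ [b] := by simp [e]
    have := (List.append_inj' this rfl).1
    apply hy
    simp [this]

theorem aux_prefix_s11 {E : Set (V × V)} {a b x : V} {l1 l2 : List V}
    (h : IsPathFrom E a b (l1 ++ x :: l2)) : IsPathFrom E a x (l1 ++ [x]) := by
  obtain ⟨h1, h2, h3⟩ := h
  refine ⟨?_, by simp, ?_⟩
  · cases l1 <;> simpa using h1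
  · have e : l1 ++ x :: l2 = (l1 ++ [x]) ++ l2 := by simp
    rw [e] at h3
    exact List.IsChain.left_of_append h3

theorem aux_join {E : Set (V × V)} {a b m : V} {l1 l2 : List V}
    (h : IsPathFrom E a m (l1 ++ [m])) (h' : IsPathFrom E m b (m :: l2)) :
    IsPathFrom E a b (l1 ++ m :: l2) := by
  obtain ⟨h1, h2, h3⟩ := h
  obtain ⟨k1, k2, k3⟩ := h'
  refine ⟨?_, ?_, ?_⟩
  · cases l1 <;> simpa using h1
  · rw [List.getLast?_append_of_ne_nil _ (by simp)]; exact k2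
  · exact List.isChain_split.2 ⟨h3, k3⟩

theorem aux_last {E : Set (V × V)} {a b : V} {p : List V}
    (h : IsPathFrom E a b p) : ∃ l, p = l ++ [b] := by
  obtain ⟨h1, h2, h3⟩ := h
  rcases List.eq_nil_or_concat p with rfl | ⟨l, c, rfl⟩
  · simp at h1
  · simp at h2; subst h2; exact ⟨l, by simp⟩

theorem aux_first {E : Set (V × V)} {a b x : V} {p : List V}
    (h : IsPathFrom E a b p) (hx : x ∈ p) :
    ∃ l l2, p = l ++ x :: l2 ∧ x ∉ l ∧ IsPathFrom E a x (l ++ [x]) := by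
  obtain ⟨l1, l2, e, hn⟩ := List.eq_append_cons_of_mem hx
  subst e
  exact ⟨l1, l2, rfl, hn, aux_prefix_s11 h⟩

theorem aux_head {E : Set (V × V)} {a b : V} {p : List V}
    (h : IsPathFrom E a b p) : ∃ l, p = a :: l := by
  obtain ⟨h1, -, -⟩ := h
  cases p with
  | nil => simp at h1
  | cons c t => simp at h1; subst h1; exact ⟨t, rfl⟩

/-- a path from a vertex not dominated by `r` to one dominated by `r` contains `r` -/
theorem aux_mem {E : Set (V × V)} {s r v w : V} {p : List V} (hv : ¬ Dominates E s r v)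
    (hw : Dominates E s r w) (hp : IsPathFrom E v w p) : r ∈ p := by
  unfold Dominates at hv
  push Not at hv
  obtain ⟨q, hq, hr⟩ := hv
  obtain ⟨l, rfl⟩ := aux_last hq
  obtain ⟨t, rfl⟩ := aux_head hp
  have := hw _ (aux_join hq hp)
  simp at this hr ⊢
  tauto

theorem aux_bridge {E : Set (V × V)} {s u r d : V} (hsc : StronglyConnected E)
    (hb : IsBridge E s u r) (hd : ImmDomIs E s r d) : u = d := by
  obtain ⟨hE, hb⟩ := hb
  obtain ⟨hd1, hd2, hd3⟩ := hd
  have hu : Dominates E s u r := fun p hp => (List.of_mem_zip (hb p hp)).1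
  have hrr : ∀ {x : V}, Dominates E s x x := fun {x} p hp => by
    obtain ⟨l, rfl⟩ := aux_last hp; simp
  have hur : u ≠ r := by
    rintro rfl
    obtain ⟨p, hp⟩ := hsc s u
    obtain ⟨l, l2, -, hn, hl⟩ := aux_first hp (hrr p hp)
    obtain ⟨l1, e⟩ := aux_zip_end hn (hb _ hl)
    exact hn (by simp [e])
  by_contra hne
  obtain ⟨p, hp⟩ := hsc s u
  obtain ⟨l, l2, -, hn, hl⟩ := aux_first hp (hrr p hp)
  have h2 : IsPathFrom E s r (l ++ u :: [r]) :=
    aux_join hl ⟨rfl, rfl, List.isChain_pair.2 hE⟩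
  have hm := hd1 _ h2
  have hm' : d ∈ l := by
    simp at hm
    rcases hm with h | h | h
    · exact h
    · exact absurd h.symm hne
    · exact absurd h hd2
  obtain ⟨m1, m2, e, hn2, hm1⟩ := aux_first hl (List.mem_append_left _ hm')
  have h3 := hd3 u hu hur _ hm1
  obtain ⟨k1, k2, rfl⟩ := List.append_of_mem hm'
  have h4 : IsPathFrom E s d (k1 ++ [d]) := by
    apply aux_prefix_s11 (l2 := k2 ++ [u]) (b := u)
    simpa using hl
  have h5 := hd3 u hu hur _ h4
  simp at h5 hn
  tauto

/-- Let `r` be a marked vertex of `G(s)` and `v` a vertex not dominated by `r`.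
Then (i) there is a path from `v` to `r` containing no vertex of `T(r)` other than
`r`, and (ii) every simple path from `v` to any vertex of `T(r)` contains the edge
`(d(r), r)`. -/
theorem paths_into_subtree
    {V : Type*} [Fintype V] (E : Set (V × V)) (s : V)
    (hsc : StronglyConnected E) (r dr v : V)
    (hm : Marked E s r) (hdr : ImmDomIs E s r dr) (hv : ¬ Dominates E s r v) :
    (∃ p, IsPathFrom E v r p ∧ ∀ x ∈ p, x ∈ Tset E s r → x = r) ∧
    (∀ w ∈ Tset E s r, ∀ p, IsPathFrom E v w p → p.Nodup →
      (dr, r) ∈ p.zip p.tail) := by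
  have hrr : Dominates E s r r := fun p hp => by
    obtain ⟨l, rfl⟩ := aux_last hp; simp
  have hT : ∀ x ∈ Tset E s r, Dominates E s r x := by
    rintro x (h | ⟨rfl, h⟩)
    · exact h.2.1
    · exact absurd hrr (by
        obtain ⟨u, hu⟩ := hm
        have := hu.2 [r] ⟨rfl, rfl, List.isChain_singleton _⟩
        simp at this)
  constructor
  · obtain ⟨p, hp⟩ := hsc v r
    obtain ⟨l, l2, -, hn, hl⟩ := aux_first hp (aux_mem hv hrr hp)
    refine ⟨_, hl, fun x hx hxT => ?_⟩
    by_contra hne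
    have hxl : x ∈ l := by simpa [hne] using hx
    obtain ⟨k1, k2, rfl⟩ := List.append_of_mem hxl
    have h4 : IsPathFrom E v x (k1 ++ [x]) := by
      apply aux_prefix_s11 (l2 := k2 ++ [r]) (b := r)
      simpa using hl
    have := aux_mem hv (hT x hxT) h4
    simp at this hn
    tauto
  · intro w hw p hp _
    obtain ⟨l, l2, rfl, hn, hl⟩ := aux_first hp (aux_mem hv (hT w hw) hp)
    have hvr : v ≠ r := by rintro rfl; exact hv hrr
    obtain ⟨u, hu⟩ := hm
    obtain rfl := aux_bridge hsc hu hdr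
    unfold Dominates at hv
    push Not at hv
    obtain ⟨q, hq, hr⟩ := hv
    obtain ⟨q0, rfl⟩ := aux_last hq
    obtain ⟨t, e⟩ := aux_head hl
    cases l with
    | nil => simp at e; exact absurd e.1.symm hvr
    | cons c l =>
      simp at e
      obtain ⟨rfl, rfl⟩ := e
      have hj := hu.2 (q0 ++ c :: (l ++ [r])) (aux_join hq hl)
      have e2 : q0 ++ c :: (l ++ [r]) = (q0 ++ c :: l) ++ [r] := by simp
      rw [e2] at hj
      obtain ⟨l1, e3⟩ := aux_zip_end (by simp at hn hr ⊢; tauto) hj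
      rcases List.eq_nil_or_concat (c :: l) with h | ⟨m, b, h⟩
      · simp at h
      · rw [h] at e3 ⊢
        have e4 : (q0 ++ m) ++ [b] = l1 ++ [u] := by simpa using e3
        have := (List.append_inj' e4 rfl).2
        simp at this
        subst this
        have := aux_zip_mem m l2 b r
        simpa using this
end
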